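/- arXiv:2512.22696 — 2 statements merged into one kernel-verified Lean document; each statement's English description precedes it below -/
import Mathlib

section
/- Let a, b, c be positive integers with gcd(a,b) = 1 and c² = a² + b² + ab, and let x be an integer with x > ab − a − b. Then the parallelogram with angles π/3 and 2π/3 and side lengths ab and x (the convex hull of (0,0), (x,0), (x + ab/2, ab·√3/2), (ab/2, ab·√3/2)) tiles into 2x congruent copies of the triangle with side lengths (a, b, c). -/
noncomputable section

abbrev Plane := EuclideanSpace ℝ (Fin 2)

/-- The point (x, y) in the Euclidean plane. -/
def pt (x y : ℝ) : Plane := (WithLp.equiv 2 (Fin 2 → ℝ)).symm ![x, y]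

/-- `Δ` is a triangle with side lengths `(p, q, r)`: the convex hull of points `P, Q, R`
with `dist Q R = p`, `dist P R = q`, `dist P Q = r`. -/
def IsTriangle (p q r : ℝ) (Δ : Set Plane) : Prop :=
  ∃ P Q R : Plane, dist Q R = p ∧ dist P R = q ∧ dist P Q = r ∧
    Δ = convexHull ℝ {P, Q, R}

/-- `S` tiles into `N` congruent copies of the `(p, q, r)` triangle: there are isometries
`f 1, …, f N` of the plane and a triangle `Δ` with side lengths `(p, q, r)` such that
`S` is the union of the `f i '' Δ` and their interiors are pairwise disjoint. -/
def TilesInto (S : Set Plane) (N : ℕ) (p q r : ℝ) : Prop :=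
  ∃ (f : Fin N → Plane ≃ᵢ Plane) (Δ : Set Plane),
    IsTriangle p q r Δ ∧
    S = ⋃ i, f i '' Δ ∧
    ∀ i j : Fin N, i ≠ j → interior (f i '' Δ) ∩ interior (f j '' Δ) = ∅

/-- The parallelogram with angles `π/3` and `2π/3`, side lengths `s` and `x`. -/
def Parallelogram60 (s x : ℝ) : Set Plane :=
  convexHull ℝ {pt 0 0, pt x 0, pt (x + s/2) (s * Real.sqrt 3 / 2),
    pt (s/2) (s * Real.sqrt 3 / 2)}

/-! In the oblique coordinates with basis vectors `1` and `exp (iπ/3)` the squared norm is the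
symmetric form `u² + uv + v²`. So the triangle with vertices `(0, 0)`, `(a, 0)`, `(a, b)` has sides
`a`, `b`, `c`, and the coordinate swap is an isometry. This triangle and its point reflection form
an `a × b` block. Stacking `a` such blocks, or `b` swapped ones, gives slanted strips of side `ab`
and of width `a` or `b`; since every integer `x > ab - a - b` has the form `ka + lb` with
`k, l ≥ 0`, strips of these two widths fill the parallelogram. -/

open Function Set

section Separation

variable {E : Type*} [AddCommGroup E] [TopologicalSpace E] [ContinuousAdd E] [Module ℝ E]
  [ContinuousSMul ℝ E]

lemma interior_subset_setOf_lt_of_subset_setOf_le {f : E →L[ℝ] ℝ} (hf : f ≠ 0) {t : ℝ} {S : Set E}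
    (hS : ∀ p ∈ S, f p ≤ t) : interior S ⊆ {p | f p < t} := by
  have hopen : IsOpenMap f := f.isOpenMap_of_ne_zero hf
  calc interior S ⊆ interior (f ⁻¹' Iic t) := interior_mono hS
    _ = f ⁻¹' Iio t := by
      rw [← hopen.preimage_interior_eq_interior_preimage f.continuous, interior_Iic]

lemma disjoint_interior_of_le_of_ge {f : E →L[ℝ] ℝ} (hf : f ≠ 0) {t : ℝ} {S T : Set E}
    (hS : ∀ p ∈ S, f p ≤ t) (hT : ∀ p ∈ T, t ≤ f p) : Disjoint (interior S) (interior T) :=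
  disjoint_left.2 fun p hpS hpT ↦
    (interior_subset_setOf_lt_of_subset_setOf_le hf hS hpS).not_ge (hT p (interior_subset hpT))

end Separation

section IsTiledBy

variable {X : Type*} [PseudoEMetricSpace X] {Δ S T : Set X} {M N : ℕ}

/-- `S` is tiled by `N` congruent copies of the fixed prototile `Δ`. Unlike in `TilesInto`, the
prototile is a parameter, so that tilings of different sets by the same tile can be combined. -/
def IsTiledBy (Δ S : Set X) (N : ℕ) : Prop :=
  ∃ f : Fin N → X ≃ᵢ X, S = ⋃ i, f i '' Δ ∧ Pairwise (Disjoint on fun i ↦ interior (f i '' Δ))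

namespace IsTiledBy

lemma self (Δ : Set X) : IsTiledBy Δ Δ 1 :=
  ⟨fun _ ↦ .refl X, by rw [iUnion_const]; exact (image_id Δ).symm, Subsingleton.pairwise⟩

lemma union (hS : IsTiledBy Δ S M) (hT : IsTiledBy Δ T N)
    (hST : Disjoint (interior S) (interior T)) : IsTiledBy Δ (S ∪ T) (M + N) := by
  obtain ⟨f, rfl, hf⟩ := hS
  obtain ⟨g, rfl, hg⟩ := hT
  have hfg (i j) : Disjoint (interior (f i '' Δ)) (interior (g j '' Δ)) :=
    hST.mono (interior_mono (subset_iUnion_of_subset i subset_rfl))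
      (interior_mono (subset_iUnion_of_subset j subset_rfl))
  have hdisj : Pairwise (Disjoint on fun i ↦ interior ((Sum.elim f g i : X ≃ᵢ X) '' Δ)) := by
    rintro (i | i) (j | j) hij
    · exact hf (ne_of_apply_ne Sum.inl hij)
    · exact hfg i j
    · exact (hfg j i).symm
    · exact hg (ne_of_apply_ne Sum.inr hij)
  refine ⟨Sum.elim f g ∘ finSumFinEquiv.symm, ?_,
    hdisj.comp_of_injective finSumFinEquiv.symm.injective⟩
  calc (⋃ i, f i '' Δ) ∪ ⋃ j, g j '' Δ = ⋃ i, (Sum.elim f g i : X ≃ᵢ X) '' Δ :=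
      (iUnion_sum (s := fun i ↦ (Sum.elim f g i : X ≃ᵢ X) '' Δ)).symm
    _ = ⋃ i, (Sum.elim f g (finSumFinEquiv.symm i) : X ≃ᵢ X) '' Δ :=
      (finSumFinEquiv.symm.surjective.iUnion_comp fun i ↦ (Sum.elim f g i : X ≃ᵢ X) '' Δ).symm

lemma image (hS : IsTiledBy Δ S N) (g : X ≃ᵢ X) : IsTiledBy Δ (g '' S) N := by
  obtain ⟨f, rfl, hf⟩ := hS
  have himage (i) : (f i).trans g '' Δ = g '' (f i '' Δ) := image_comp g (f i) Δ
  have hinterior (A : Set X) : interior (g '' A) = g '' interior A :=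
    (g.toHomeomorph.image_interior A).symm
  refine ⟨fun i ↦ (f i).trans g, by simp only [himage, image_iUnion], fun i j hij ↦ ?_⟩
  simpa only [Function.onFun, himage, hinterior, disjoint_image_iff g.injective] using hf hij

end IsTiledBy

end IsTiledBy

lemma IsTiledBy.tilesInto {Δ S : Set Plane} {N : ℕ} {p q r : ℝ} (hS : IsTiledBy Δ S N)
    (hΔ : IsTriangle p q r Δ) : TilesInto S N p q r := by
  obtain ⟨f, hf, hdisj⟩ := hS
  exact ⟨f, Δ, hΔ, hf, fun i j hij ↦ (hdisj hij).inter_eq⟩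

/-- Oblique coordinates on the plane: `(u, v)` stands for `u + v * exp (iπ/3)`, in the usual
identification of the plane with `ℂ`. -/
def oblique : (ℝ × ℝ) ≃L[ℝ] Plane :=
  LinearEquiv.toContinuousLinearEquiv
    { toFun p := pt (p.1 + p.2 / 2) (p.2 * √3 / 2)
      map_add' p q := by ext i; fin_cases i <;> (simp [pt]; ring)
      map_smul' t p := by ext i; fin_cases i <;> (simp [pt]; ring)
      invFun z := (z 0 - z 1 / √3, 2 * z 1 / √3)
      left_inv p := by
        ext
        · simp [pt]; field_simp; ring
        · simp [pt]; field_simp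
      right_inv z := by
        ext i
        fin_cases i
        · simp [pt]; field_simp; ring
        · simp [pt] }

lemma oblique_apply (u v : ℝ) : oblique (u, v) = pt (u + v / 2) (v * √3 / 2) := rfl

lemma norm_oblique (u v : ℝ) : ‖oblique (u, v)‖ = √(u ^ 2 + v ^ 2 + u * v) := by
  have h3 : √3 ^ 2 = 3 := Real.sq_sqrt (by norm_num)
  rw [oblique_apply, EuclideanSpace.norm_eq]
  congr 1
  simp only [pt, Fin.sum_univ_two, Real.norm_eq_abs, sq_abs, WithLp.equiv_symm_apply,
    Matrix.cons_val_zero, Matrix.cons_val_one]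
  linear_combination v ^ 2 / 4 * h3

lemma dist_oblique (u v u' v' : ℝ) : dist (oblique (u, v)) (oblique (u', v')) =
    √((u - u') ^ 2 + (v - v') ^ 2 + (u - u') * (v - v')) := by
  rw [dist_eq_norm, ← map_sub, Prod.mk_sub_mk, norm_oblique]

/-- The reflection of the plane that exchanges the two oblique coordinates. -/
def obliqueSwap : Plane ≃ᵢ Plane where
  toEquiv := (oblique.symm.trans <| (ContinuousLinearEquiv.prodComm ℝ ℝ ℝ).trans oblique).toEquiv
  isometry_toFun := .of_dist_eq <| oblique.surjective.forall₂.2 fun ⟨u, v⟩ ⟨u', v'⟩ ↦ by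
    simp [dist_oblique, add_comm, mul_comm]

lemma obliqueSwap_oblique (p : ℝ × ℝ) : obliqueSwap (oblique p) = oblique p.swap :=
  congrArg (fun q ↦ oblique q.swap) (oblique.symm_apply_apply p)

lemma obliqueSwap_image_oblique_image (A : Set (ℝ × ℝ)) :
    obliqueSwap '' (oblique '' A) = oblique '' (Prod.swap '' A) := by
  simp only [image_image, obliqueSwap_oblique]

lemma addRight_image_oblique_image (p : ℝ × ℝ) (A : Set (ℝ × ℝ)) :
    IsometryEquiv.addRight (oblique p) '' (oblique '' A) = oblique '' ((· + p) '' A) := by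
  simp only [image_image, IsometryEquiv.addRight_apply, map_add]

lemma subLeft_image_oblique_image (p : ℝ × ℝ) (A : Set (ℝ × ℝ)) :
    IsometryEquiv.subLeft (oblique p) '' (oblique '' A) = oblique '' ((p - ·) '' A) := by
  simp only [image_image, IsometryEquiv.subLeft_apply, map_sub]

lemma oblique_image_convexHull (A : Set (ℝ × ℝ)) :
    oblique '' convexHull ℝ A = convexHull ℝ (oblique '' A) :=
  oblique.toLinearMap.image_convexHull A

lemma disjoint_interior_oblique_image {A B : Set (ℝ × ℝ)} :
    Disjoint (interior (oblique '' A)) (interior (oblique '' B)) ↔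
      Disjoint (interior A) (interior B) := by
  have hinterior (A : Set (ℝ × ℝ)) : interior (oblique '' A) = oblique '' interior A :=
    (oblique.toHomeomorph.image_interior A).symm
  rw [hinterior, hinterior, disjoint_image_iff oblique.injective]

section Parallelogram

variable {Δ : Set Plane} {s x y : ℝ} {k l M N : ℕ}

lemma parallelogram60_eq_oblique_image (hs : 0 ≤ s) (hx : 0 ≤ x) :
    Parallelogram60 s x = oblique '' Icc 0 (x, s) := by
  have hvertices : {pt 0 0, pt x 0, pt (x + s / 2) (s * √3 / 2), pt (s / 2) (s * √3 / 2)} =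
      oblique '' ({0, x} ×ˢ {0, s}) := by
    ext p
    simp only [insert_prod, singleton_prod, image_union, image_insert_eq, image_singleton,
      oblique_apply, zero_div, add_zero, zero_mul, zero_add, mem_union, mem_insert_iff,
      mem_singleton_iff]
    tauto
  rw [Parallelogram60, hvertices, ← Prod.mk_zero_zero, ← Icc_prod_Icc, ← segment_eq_Icc hx,
    ← segment_eq_Icc hs, ← convexHull_pair, ← convexHull_pair, ← convexHull_prod,
    oblique_image_convexHull]

namespace IsTiledBy

lemma parallelogram60_swap (hs : 0 ≤ s) (hx : 0 ≤ x) (h : IsTiledBy Δ (Parallelogram60 s x) N) :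
    IsTiledBy Δ (Parallelogram60 x s) N := by
  have himage : obliqueSwap '' Parallelogram60 s x = Parallelogram60 x s := by
    rw [parallelogram60_eq_oblique_image hs hx, parallelogram60_eq_oblique_image hx hs,
      obliqueSwap_image_oblique_image, ← Prod.mk_zero_zero, ← Icc_prod_Icc, image_swap_prod,
      Icc_prod_Icc]
  exact himage ▸ h.image obliqueSwap

lemma parallelogram60_add (hs : 0 ≤ s) (hx : 0 ≤ x) (hy : 0 ≤ y)
    (h : IsTiledBy Δ (Parallelogram60 s x) M) (h' : IsTiledBy Δ (Parallelogram60 s y) N) :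
    IsTiledBy Δ (Parallelogram60 s (x + y)) (M + N) := by
  have htranslate : IsometryEquiv.addRight (oblique (x, 0)) '' Parallelogram60 s y =
      oblique '' Icc (x, 0) (x + y, s) := by
    rw [parallelogram60_eq_oblique_image hs hy, addRight_image_oblique_image, image_add_const_Icc]
    simp [add_comm]
  have hunion : Parallelogram60 s (x + y) =
      Parallelogram60 s x ∪ oblique '' Icc (x, 0) (x + y, s) := by
    rw [parallelogram60_eq_oblique_image hs (by positivity), parallelogram60_eq_oblique_image hs hx,
      ← image_union, ← Prod.mk_zero_zero]
    simp only [← Icc_prod_Icc, ← union_prod]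
    rw [Icc_union_Icc_eq_Icc hx (by linarith)]
  rw [hunion]
  refine h.union (htranslate ▸ h'.image _) ?_
  rw [parallelogram60_eq_oblique_image hs hx, disjoint_interior_oblique_image]
  have hfst : ContinuousLinearMap.fst ℝ ℝ ℝ ≠ 0 := fun h0 ↦ by
    simpa using DFunLike.congr_fun h0 (1, 0)
  exact disjoint_interior_of_le_of_ge hfst (fun p hp ↦ hp.2.1) fun p hp ↦ hp.1.1

lemma parallelogram60_mul (hs : 0 ≤ s) (hx : 0 ≤ x) (h : IsTiledBy Δ (Parallelogram60 s x) N)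
    (hk : k ≠ 0) : IsTiledBy Δ (Parallelogram60 s (k * x)) (k * N) := by
  induction k, Nat.one_le_iff_ne_zero.2 hk using Nat.le_induction with
  | base => simpa using h
  | succ k hk ih =>
    convert (ih (by omega)).parallelogram60_add hs (by positivity) hx h using 1 <;>
      push_cast <;> ring_nf

lemma parallelogram60_combination (hs : 0 ≤ s) (hx : 0 ≤ x) (hy : 0 ≤ y)
    (h : IsTiledBy Δ (Parallelogram60 s x) M) (h' : IsTiledBy Δ (Parallelogram60 s y) N)
    (hkl : k ≠ 0 ∨ l ≠ 0) : IsTiledBy Δ (Parallelogram60 s (k * x + l * y)) (k * M + l * N) := by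
  rcases eq_or_ne k 0 with rfl | hk
  · simpa using h'.parallelogram60_mul hs hy (hkl.resolve_left (by simp))
  rcases eq_or_ne l 0 with rfl | hl
  · simpa using h.parallelogram60_mul hs hx hk
  exact (h.parallelogram60_mul hs hx hk).parallelogram60_add hs (by positivity) (by positivity)
    (h'.parallelogram60_mul hs hy hl)

end IsTiledBy

end Parallelogram

section Triangle

variable {a b c : ℝ}

/-- The prototile: the triangle with vertices `(a, b)`, `(0, 0)`, `(a, 0)` in oblique coordinates,
in which the sides of lengths `a` and `b` enclose the angle `2π/3`. -/
def obliqueTriangle (a b : ℝ) : Set Plane :=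
  convexHull ℝ {oblique (a, b), oblique (0, 0), oblique (a, 0)}

lemma isTriangle_obliqueTriangle (ha : 0 ≤ a) (hb : 0 ≤ b) (hc : 0 ≤ c)
    (h : c ^ 2 = a ^ 2 + b ^ 2 + a * b) : IsTriangle a b c (obliqueTriangle a b) := by
  refine ⟨_, _, _, ?_, ?_, ?_, rfl⟩
  · simp [dist_oblique, Real.sqrt_sq ha]
  · simp [dist_oblique, Real.sqrt_sq hb]
  · simp [dist_oblique, ← h, Real.sqrt_sq hc]

/-- The linear form vanishing on the diagonal from `(0, 0)` to `(a, b)` of a block. -/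
def diagonalForm (a b : ℝ) : ℝ × ℝ →L[ℝ] ℝ :=
  a • ContinuousLinearMap.snd ℝ ℝ ℝ - b • ContinuousLinearMap.fst ℝ ℝ ℝ

lemma diagonalForm_apply (a b : ℝ) (p : ℝ × ℝ) : diagonalForm a b p = a * p.2 - b * p.1 := rfl

lemma diagonalForm_ne_zero (ha : a ≠ 0) : diagonalForm a b ≠ 0 := fun h ↦
  ha <| by simpa [diagonalForm_apply] using DFunLike.congr_fun h (0, 1)

lemma convexHull_triangle_eq_Icc_inter (ha : 0 < a) (hb : 0 < b) :
    convexHull ℝ {(a, b), (0, 0), (a, 0)} = Icc 0 (a, b) ∩ {p | diagonalForm a b p ≤ 0} := by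
  refine (convexHull_min ?_ ?_).antisymm ?_
  · rintro p (rfl | rfl | rfl) <;>
      simp [diagonalForm_apply, ha.le, hb.le, mul_nonneg, mul_comm, ← Prod.mk_zero_zero]
  · exact (convex_Icc _ _).inter (convex_halfSpace_le (diagonalForm a b).isLinear 0)
  · rintro ⟨u, v⟩ ⟨⟨⟨-, hv⟩, ⟨hu, -⟩⟩, hp⟩
    replace hv : 0 ≤ v := hv
    replace hu : u ≤ a := hu
    replace hp : a * v - b * u ≤ 0 := hp
    have hdiag : v / b ≤ u / a := by
      rw [div_le_div_iff₀ hb ha]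
      linarith
    have hua : u / a ≤ 1 := (div_le_one ha).2 hu
    refine mem_convexHull_of_exists_fintype ![v / b, 1 - u / a, u / a - v / b]
      ![(a, b), (0, 0), (a, 0)] ?_ ?_ ?_ ?_
    · simp [Fin.forall_fin_succ, hua, hdiag, div_nonneg hv hb.le]
    · simp [Fin.sum_univ_three]; ring
    · simp [Fin.forall_fin_succ]
    · ext
      · simp [Fin.sum_univ_three]; field_simp; ring
      · simp [Fin.sum_univ_three]; field_simp

lemma obliqueTriangle_eq_oblique_image (ha : 0 < a) (hb : 0 < b) :
    obliqueTriangle a b = oblique '' (Icc 0 (a, b) ∩ {p | diagonalForm a b p ≤ 0}) := by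
  rw [← convexHull_triangle_eq_Icc_inter ha hb, oblique_image_convexHull, image_insert_eq,
    image_pair, obliqueTriangle]

lemma subLeft_image_obliqueTriangle (ha : 0 < a) (hb : 0 < b) :
    IsometryEquiv.subLeft (oblique (a, b)) '' obliqueTriangle a b =
      oblique '' (Icc 0 (a, b) ∩ {p | 0 ≤ diagonalForm a b p}) := by
  have hcorner : diagonalForm a b (a, b) = 0 := by rw [diagonalForm_apply]; ring
  have hreflect :
      ((a, b) - ·) '' {p | diagonalForm a b p ≤ 0} = {p | 0 ≤ diagonalForm a b p} := by
    ext p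
    rw [mem_image_iff_of_inverse (sub_sub_cancel (a, b)) (sub_sub_cancel (a, b))]
    simp [map_sub, hcorner]
  rw [obliqueTriangle_eq_oblique_image ha hb, subLeft_image_oblique_image,
    image_inter sub_right_injective, image_const_sub_Icc, sub_self, sub_zero, hreflect]

lemma isTiledBy_obliqueTriangle_parallelogram60 (ha : 0 < a) (hb : 0 < b) :
    IsTiledBy (obliqueTriangle a b) (Parallelogram60 b a) 2 := by
  have hunion : Parallelogram60 b a = obliqueTriangle a b ∪
      IsometryEquiv.subLeft (oblique (a, b)) '' obliqueTriangle a b := by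
    rw [subLeft_image_obliqueTriangle ha hb, obliqueTriangle_eq_oblique_image ha hb,
      parallelogram60_eq_oblique_image hb.le ha.le, ← image_union, ← inter_union_distrib_left,
      inter_eq_left.2]
    exact fun p _ ↦ le_total (diagonalForm a b p) 0
  rw [hunion]
  refine (IsTiledBy.self _).union ((IsTiledBy.self _).image _) ?_
  rw [subLeft_image_obliqueTriangle ha hb, obliqueTriangle_eq_oblique_image ha hb,
    disjoint_interior_oblique_image]
  exact disjoint_interior_of_le_of_ge (diagonalForm_ne_zero ha.ne') (fun p hp ↦ hp.2)
    fun p hp ↦ hp.2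

lemma isTiledBy_obliqueTriangle_parallelogram60_mul (ha : 0 < a) (hb : 0 < b) {m : ℕ} (hm : m ≠ 0) :
    IsTiledBy (obliqueTriangle a b) (Parallelogram60 (m * b) a) (m * 2) :=
  (isTiledBy_obliqueTriangle_parallelogram60 ha hb).parallelogram60_swap hb.le ha.le
    |>.parallelogram60_mul ha.le hb.le hm |>.parallelogram60_swap ha.le (by positivity)

lemma isTiledBy_obliqueTriangle_parallelogram60_mul_swap (ha : 0 < a) (hb : 0 < b) {n : ℕ}
    (hn : n ≠ 0) : IsTiledBy (obliqueTriangle a b) (Parallelogram60 (n * a) b) (n * 2) :=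
  (isTiledBy_obliqueTriangle_parallelogram60 ha hb).parallelogram60_mul hb.le ha.le hn
    |>.parallelogram60_swap hb.le (by positivity)

end Triangle

lemma one_lt_of_sq_eq_add {a b c : ℕ} (ha : 0 < a) (hb : 0 < b)
    (h : c ^ 2 = a ^ 2 + b ^ 2 + a * b) : 1 < a := by
  by_contra! ha1
  obtain rfl : a = 1 := by omega
  have hbc : b < c := by nlinarith
  have hcb : c < b + 1 := by nlinarith
  omega

lemma exists_eq_mul_add_mul_of_coprime {a b : ℕ} (ha : 0 < a) (hb : 0 < b) (hab : a.Coprime b)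
    {x : ℤ} (hx : (a : ℤ) * b - a - b < x) : ∃ k l : ℕ, x = k * a + l * b := by
  have hpred : ((a.pred * b.pred : ℕ) : ℤ) ≤ x := by
    rw [Nat.pred_eq_sub_one, Nat.pred_eq_sub_one]
    push_cast [Nat.cast_pred ha, Nat.cast_pred hb]
    linarith
  lift x to ℕ using (Int.natCast_nonneg _).trans hpred
  obtain ⟨k, l, hkl⟩ := Nat.exists_add_mul_eq_of_gcd_dvd_of_mul_pred_le a b x (by simp [hab])
    (by exact_mod_cast hpred)
  exact ⟨k, l, by exact_mod_cast hkl.symm⟩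

lemma exists_eq_mul_add_mul_of_sq_eq_add {a b c : ℕ} (ha : 0 < a) (hb : 0 < b)
    (hab : a.Coprime b) (h : c ^ 2 = a ^ 2 + b ^ 2 + a * b) {x : ℤ}
    (hx : (a : ℤ) * b - a - b < x) : ∃ k l : ℕ, (k ≠ 0 ∨ l ≠ 0) ∧ x = k * a + l * b := by
  have ha1 : 1 < a := one_lt_of_sq_eq_add ha hb h
  have hb1 : 1 < b := one_lt_of_sq_eq_add hb ha (by rw [h]; ring)
  have hx0 : 0 < x := by nlinarith
  obtain ⟨k, l, rfl⟩ := exists_eq_mul_add_mul_of_coprime ha hb hab hx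
  refine ⟨k, l, ?_, rfl⟩
  by_contra! h0
  simp [h0] at hx0

theorem stmt1_general {a b c s : ℝ} (ha : 0 < a) (hb : 0 < b) (hc : 0 ≤ c)
    (h : c ^ 2 = a ^ 2 + b ^ 2 + a * b) (hs : 0 < s) {m n : ℕ} (hm : s = m * b) (hn : s = n * a)
    {k l : ℕ} (hkl : k ≠ 0 ∨ l ≠ 0) :
    TilesInto (Parallelogram60 s (k * a + l * b)) (2 * (k * m + l * n)) a b c := by
  have hm0 : m ≠ 0 := by rintro rfl; simp [hm] at hs
  have hn0 : n ≠ 0 := by rintro rfl; simp [hn] at hs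
  have hA : IsTiledBy (obliqueTriangle a b) (Parallelogram60 s a) (m * 2) :=
    hm ▸ isTiledBy_obliqueTriangle_parallelogram60_mul ha hb hm0
  have hB : IsTiledBy (obliqueTriangle a b) (Parallelogram60 s b) (n * 2) :=
    hn ▸ isTiledBy_obliqueTriangle_parallelogram60_mul_swap ha hb hn0
  have hN : 2 * (k * m + l * n) = k * (m * 2) + l * (n * 2) := by ring
  rw [hN]
  exact (hA.parallelogram60_combination hs.le ha.le hb.le hB hkl).tilesInto
    (isTriangle_obliqueTriangle ha.le hb.le hc h)

theorem stmt1 (a b c : ℕ) (ha : 0 < a) (hb : 0 < b) (hc : 0 < c)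
    (hab : Nat.Coprime a b) (h : c ^ 2 = a ^ 2 + b ^ 2 + a * b)
    (x : ℤ) (hx : (a : ℤ) * b - a - b < x) :
    TilesInto (Parallelogram60 ((a : ℝ) * b) (x : ℝ)) (2 * x).toNat a b c := by
  obtain ⟨k, l, hkl, rfl⟩ := exists_eq_mul_add_mul_of_sq_eq_add ha hb hab h hx
  exact_mod_cast stmt1_general (a := a) (b := b) (c := c) (by positivity) (by positivity)
    (by positivity) (by exact_mod_cast h) (by positivity) rfl (mul_comm _ _) hkl
end
end

section
/- Let a, b, c be pairwise coprime positive integers with c² = a² + b² + ab, and suppose that a and b are both squarefree. If X is a positive real number such that the equilateral triangle with side length X tiles into N congruent copies of the triangle with side lengths (a, b, c) for some positive integer N, then X = m·a·b for some positive integer m. -/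
noncomputable section

/-- The equilateral triangle with side length `X`. -/
def EquilateralTri (X : ℝ) : Set Plane :=
  convexHull ℝ {pt 0 0, pt X 0, pt (X/2) (X * Real.sqrt 3 / 2)}

open MeasureTheory Set
open scoped Pointwise

/-!
Comparing areas gives `X ^ 2 = N * (a * b)`: the sides `a` and `b` of the tile enclose an angle of
120°, so the tile has area `√3 / 4 * (a * b)`.

The equilateral triangle lies on one side of the line through its base, so each tile meets that
line in a full edge, in a vertex, or not at all. A separating functional for two tiles overlapping
along the line would vanish on it, although both tiles reach the same side of it; hence the traces
of the tiles on the base do not overlap, and `X` is a sum of `a`s, `b`s and `c`s. In particular `X`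
is an integer, and since `a * b` is squarefree and divides `X ^ 2`, it divides `X`.
-/

section ConvexMeasure

variable {E : Type*} [NormedAddCommGroup E] [NormedSpace ℝ E] [FiniteDimensional ℝ E]
  [MeasurableSpace E] [BorelSpace E] (μ : Measure E) [μ.IsAddHaarMeasure] {s t : Set E}

lemma aedisjoint_of_disjoint_interior (hs : Convex ℝ s) (ht : Convex ℝ t)
    (hst : Disjoint (interior s) (interior t)) : AEDisjoint μ s t := by
  refine measure_mono_null ?_
    (measure_union_null (hs.addHaar_frontier μ) (ht.addHaar_frontier μ))
  rintro x ⟨hxs, hxt⟩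
  by_cases hx : x ∈ interior s
  · exact .inr ⟨subset_closure hxt, fun hx' => disjoint_left.1 hst hx hx'⟩
  · exact .inl ⟨subset_closure hxs, hx⟩

lemma measure_iUnion_of_disjoint_interior {ι : Type*} [Fintype ι] {T : ι → Set E}
    (hconv : ∀ i, Convex ℝ (T i))
    (hdisj : Pairwise fun i j => Disjoint (interior (T i)) (interior (T j))) :
    μ (⋃ i, T i) = ∑ i, μ (T i) := by
  rw [measure_iUnion₀ _ fun i => (hconv i).nullMeasurableSet μ, tsum_fintype]
  exact fun i j hij => aedisjoint_of_disjoint_interior μ (hconv i) (hconv j) (hdisj hij)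

lemma nonempty_interior_of_measure_ne_zero (hs : Convex ℝ s) (h : μ s ≠ 0) :
    (interior s).Nonempty := by
  by_contra! hempty
  have hfrontier : s ⊆ frontier s := by
    simpa [frontier, hempty] using subset_closure
  exact h (measure_mono_null hfrontier (hs.addHaar_frontier μ))

end ConvexMeasure

section SupportingHyperplane

variable {E F : Type*} [NormedAddCommGroup E] [NormedSpace ℝ E]
  [NormedAddCommGroup F] [NormedSpace ℝ F] {φ : E →L[ℝ] ℝ} {s t : Set E}

lemma exists_apply_ne_zero_of_nonempty_interior (hφ : φ ≠ 0) (hs : (interior s).Nonempty) :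
    ∃ x ∈ s, φ x ≠ 0 := by
  by_contra! hzero
  have hker : φ.ker = ⊤ :=
    Submodule.eq_top_of_nonempty_interior' _ (hs.mono (interior_mono fun x hx => hzero x hx))
  exact hφ (ContinuousLinearMap.coe_injective (LinearMap.ker_eq_top.1 hker))

-- A functional `ψ` separating `s` from `t` is locally maximal along `g` at a common point of the
-- traces, so it vanishes on `ker φ`; but `s` and `t` both reach the side `0 < φ`.
lemma disjoint_interior_preimage_of_disjoint_interior {g : F →L[ℝ] E} (hφ : φ ≠ 0)
    (hg : φ.ker ≤ g.range) (hs : Convex ℝ s) (ht : Convex ℝ t)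
    (hs_int : (interior s).Nonempty) (ht_int : (interior t).Nonempty)
    (hs_nonneg : ∀ x ∈ s, 0 ≤ φ x) (ht_nonneg : ∀ x ∈ t, 0 ≤ φ x)
    (hst : Disjoint (interior s) (interior t)) :
    Disjoint (interior (g ⁻¹' s)) (g ⁻¹' t) := by
  have hst' : Disjoint (interior s) t :=
    (hst.closure_right isOpen_interior).mono_right
      (ht.closure_interior_eq_closure_of_nonempty_interior ht_int ▸ subset_closure)
  obtain ⟨ψ, u, hψ, hψs, hψt⟩ := geometric_hahn_banach_of_nonempty_interior hs ht hst' hs_int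
    (ht_int.mono interior_subset)
  refine disjoint_left.2 fun x hxs hxt => hψ ?_
  have hmax : IsLocalMax (ψ.comp g) x := by
    filter_upwards [mem_interior_iff_mem_nhds.1 hxs] with y hy
    exact (hψs _ hy).trans (hψt _ hxt)
  have hψg : ψ.comp g = 0 := hmax.hasFDerivAt_eq_zero (ψ.comp g).hasFDerivAt
  have hψker (v : E) (hv : φ v = 0) : ψ v = 0 := by
    obtain ⟨y, rfl⟩ := hg hv
    exact DFunLike.congr_fun hψg y
  have hψx : ψ (g x) = 0 := DFunLike.congr_fun hψg x
  have hxs' : x ∈ g ⁻¹' s := interior_subset hxs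
  have hu : u = 0 := le_antisymm (hψx ▸ hψt _ hxt) (hψx ▸ hψs _ hxs')
  obtain ⟨z, hzs, hz⟩ := exists_apply_ne_zero_of_nonempty_interior hφ hs_int
  obtain ⟨w, hwt, hw⟩ := exists_apply_ne_zero_of_nonempty_interior hφ ht_int
  have hprop (v : E) : φ z * ψ v = φ v * ψ z := by
    have := hψker (φ z • v - φ v • z) (by simp [mul_comm])
    simpa [sub_eq_zero] using this
  have hψz : ψ z = 0 := by
    have hw_pos : 0 < φ w := (ht_nonneg w hwt).lt_of_ne' hw
    refine le_antisymm (hu ▸ hψs z hzs) (nonneg_of_mul_nonneg_right ?_ hw_pos)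
    exact hprop w ▸ mul_nonneg (hs_nonneg z hzs) (hu ▸ hψt w hwt)
  ext v
  simpa [hψz, hz] using hprop v

lemma mem_convexHull_inter_ker {x : E} (hs : ∀ y ∈ s, 0 ≤ φ y) (hx : x ∈ convexHull ℝ s)
    (hφx : φ x = 0) : x ∈ convexHull ℝ (s ∩ φ.ker) := by
  let C : Set E := {y | 0 ≤ φ y ∧ (φ y = 0 → y ∈ convexHull ℝ (s ∩ φ.ker))}
  have hsC : s ⊆ C := fun y hy => ⟨hs y hy, fun hφy => subset_convexHull ℝ _ ⟨hy, hφy⟩⟩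
  have hC : Convex ℝ C := by
    refine convex_iff_forall_pos.2 fun y hy z hz a b ha hb hab => ⟨?_, fun h => ?_⟩
    · simpa using add_nonneg (mul_nonneg ha.le hy.1) (mul_nonneg hb.le hz.1)
    · have hsum : a * φ y + b * φ z = 0 := by simpa using h
      obtain ⟨hay, hbz⟩ := (add_eq_zero_iff_of_nonneg (mul_nonneg ha.le hy.1)
        (mul_nonneg hb.le hz.1)).1 hsum
      have hφy : φ y = 0 := (mul_eq_zero.1 hay).resolve_left ha.ne'
      have hφz : φ z = 0 := (mul_eq_zero.1 hbz).resolve_left hb.ne'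
      exact convex_convexHull ℝ _ (hy.2 hφy) (hz.2 hφz) ha.le hb.le hab
  exact (convexHull_min hsC hC hx).2 hφx

lemma preimage_convexHull_eq {g : F →ₗ[ℝ] E} (hg : Function.Injective g) (hgφ : g.range = φ.ker)
    (hs : ∀ y ∈ s, 0 ≤ φ y) : g ⁻¹' convexHull ℝ s = convexHull ℝ (g ⁻¹' s) := by
  have himage : g '' convexHull ℝ (g ⁻¹' s) = convexHull ℝ (s ∩ φ.ker) := by
    rw [g.image_convexHull, image_preimage_eq_inter_range, ← LinearMap.coe_range, hgφ]
  refine Subset.antisymm (fun x hx => ?_) ?_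
  · have hφx : φ (g x) = 0 := hgφ.le ⟨x, rfl⟩
    have hx' := mem_convexHull_inter_ker hs hx hφx
    rwa [← himage, hg.mem_set_image] at hx'
  · rw [← image_subset_iff, himage]
    exact convexHull_mono inter_subset_left

end SupportingHyperplane

section Edge

variable {E : Type*} [NormedAddCommGroup E] [NormedSpace ℝ E]

lemma volume_real_convexHull_preimage_pair (g : ℝ →ₗᵢ[ℝ] E) (P Q : E) :
    volume.real (convexHull ℝ (g ⁻¹' {P, Q})) = 0 ∨
      volume.real (convexHull ℝ (g ⁻¹' {P, Q})) = dist P Q := by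
  have hpair (x y : ℝ) : volume.real (convexHull ℝ (g ⁻¹' {g x, g y})) = dist (g x) (g y) := by
    rw [← image_pair, preimage_image_eq _ g.injective, convexHull_pair, segment_eq_uIcc,
      Real.volume_real_interval, g.dist_map, dist_comm, Real.dist_eq]
  by_cases hsub : (g ⁻¹' {P, Q}).Subsingleton
  · left
    rw [hsub.convex.convexHull_eq, measureReal_def, hsub.measure_zero, ENNReal.toReal_zero]
  · right
    obtain ⟨x, hx, y, hy, hxy⟩ := not_subsingleton_iff.1 hsub
    rcases hx with rfl | rfl <;> rcases hy with hy | hy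
    · exact absurd (g.injective hy.symm) hxy
    · rw [← hy, hpair]
    · rw [← hy, hpair]
    · exact absurd (g.injective hy.symm) hxy

lemma volume_real_preimage_convexHull_triple {φ : E →L[ℝ] ℝ} (hφ : φ ≠ 0) {g : ℝ →ₗᵢ[ℝ] E}
    (hg : g.range = φ.ker) {P Q R : E} (hnonneg : ∀ z ∈ convexHull ℝ {P, Q, R}, 0 ≤ φ z)
    (hint : (interior (convexHull ℝ {P, Q, R})).Nonempty) :
    volume.real (g ⁻¹' convexHull ℝ {P, Q, R}) ∈ ({0, dist Q R, dist P R, dist P Q} : Set ℝ) := by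
  obtain ⟨A, hA, hφA⟩ : ∃ A ∈ ({P, Q, R} : Set E), φ A ≠ 0 := by
    obtain ⟨z, hz, hφz⟩ := exists_apply_ne_zero_of_nonempty_interior hφ hint
    by_contra! hvertices
    have hsub : convexHull ℝ {P, Q, R} ⊆ φ.ker := convexHull_min hvertices φ.ker.convex
    exact hφz (hsub hz)
  have hdrop {B C : E} : g ⁻¹' {A, B, C} = g ⁻¹' {B, C} := by
    have hAg : A ∉ range g := fun h => hφA (hg.le h)
    rw [insert_eq, preimage_union, preimage_singleton_eq_empty.2 hAg, empty_union]
  have hpre : g ⁻¹' convexHull ℝ {P, Q, R} = convexHull ℝ (g ⁻¹' {P, Q, R}) :=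
    preimage_convexHull_eq (g := g.toLinearMap) g.injective hg
      fun z hz => hnonneg z (subset_convexHull ℝ _ hz)
  rw [hpre]
  rcases hA with rfl | rfl | rfl
  · rw [hdrop]
    rcases volume_real_convexHull_preimage_pair g Q R with h | h <;> simp [h]
  · rw [insert_comm P A, hdrop]
    rcases volume_real_convexHull_preimage_pair g P R with h | h <;> simp [h]
  · rw [pair_comm Q A, insert_comm P A, hdrop]
    rcases volume_real_convexHull_preimage_pair g P Q with h | h <;> simp [h]

end Edge

section Area

lemma volume_prod_standardTriangle :
    volume {p : ℝ × ℝ | 0 ≤ p.1 ∧ 0 ≤ p.2 ∧ p.1 + p.2 ≤ 1} = ENNReal.ofReal (1 / 2) := by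
  set T : Set (ℝ × ℝ) := {p | 0 ≤ p.1 ∧ 0 ≤ p.2 ∧ p.1 + p.2 ≤ 1}
  have hmeas : MeasurableSet T := by measurability
  have hslice (x : ℝ) :
      volume (Prod.mk x ⁻¹' T) = (Icc 0 1).indicator (fun x => ENNReal.ofReal (1 - x)) x := by
    by_cases hx : x ∈ Icc (0 : ℝ) 1
    · have hT : Prod.mk x ⁻¹' T = Icc 0 (1 - x) := by
        ext y
        simp [T, hx.1, le_sub_iff_add_le']
      rw [hT, Real.volume_Icc, indicator_of_mem hx, sub_zero]
    · have hT : Prod.mk x ⁻¹' T = ∅ :=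
        eq_empty_of_forall_notMem fun y hy => hx ⟨hy.1, by linarith [hy.2.1, hy.2.2]⟩
      rw [hT, measure_empty, indicator_of_notMem hx]
  have hintegral : ∫ x in Icc (0 : ℝ) 1, (1 - x) = 1 / 2 := by
    rw [integral_Icc_eq_integral_Ioc, ← intervalIntegral.integral_of_le zero_le_one]
    rw [intervalIntegral.integral_sub (by simp) (by simp)]
    norm_num
  rw [Measure.volume_eq_prod, Measure.prod_apply hmeas]
  simp_rw [hslice]
  rw [lintegral_indicator measurableSet_Icc, ← hintegral, ofReal_integral_eq_lintegral_ofReal]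
  · exact Continuous.integrableOn_Icc (by fun_prop)
  · filter_upwards [ae_restrict_mem measurableSet_Icc] with x hx
    exact sub_nonneg.2 hx.2

lemma convexHull_zero_single_single :
    convexHull ℝ {0, EuclideanSpace.single 0 1, EuclideanSpace.single 1 1} =
      {v : Plane | 0 ≤ v 0 ∧ 0 ≤ v 1 ∧ v 0 + v 1 ≤ 1} := by
  refine Subset.antisymm (convexHull_min ?_ ?_) fun v ⟨hv0, hv1, hv⟩ => ?_
  · rintro v (rfl | rfl | rfl) <;> simp
  · rintro v ⟨hv0, hv1, hv⟩ w ⟨hw0, hw1, hw⟩ s t hs ht hst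
    simp only [mem_ofPred_eq, PiLp.add_apply, PiLp.smul_apply, smul_eq_mul]
    exact ⟨by positivity, by positivity, by nlinarith⟩
  · refine mem_convexHull_of_exists_fintype ![1 - v 0 - v 1, v 0, v 1]
      ![0, EuclideanSpace.single 0 1, EuclideanSpace.single 1 1] ?_ ?_ ?_ ?_
    · simp [Fin.forall_fin_succ, hv0, hv1]
      linarith
    · simp [Fin.sum_univ_succ]
    · simp [Fin.forall_fin_succ]
    · ext i
      fin_cases i <;> simp [Fin.sum_univ_succ]

lemma volume_convexHull_zero_single_single :
    volume (convexHull ℝ {(0 : Plane), EuclideanSpace.single 0 1, EuclideanSpace.single 1 1}) =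
      ENNReal.ofReal (1 / 2) := by
  have hmp := (volume_preserving_finTwoArrow ℝ).comp (PiLp.volume_preserving_ofLp (Fin 2))
  have hmeas : MeasurableSet {p : ℝ × ℝ | 0 ≤ p.1 ∧ 0 ≤ p.2 ∧ p.1 + p.2 ≤ 1} := by measurability
  rw [convexHull_zero_single_single, ← volume_prod_standardTriangle,
    ← hmp.measure_preimage hmeas.nullMeasurableSet]
  rfl

lemma volume_convexHull_triple (P Q R : Plane) :
    volume (convexHull ℝ {P, Q, R}) =
      ENNReal.ofReal (|(Q 0 - P 0) * (R 1 - P 1) - (R 0 - P 0) * (Q 1 - P 1)| / 2) := by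
  let e := (EuclideanSpace.basisFun (Fin 2) ℝ).toBasis
  let L : Plane →ₗ[ℝ] Plane := e.constr ℝ ![Q - P, R - P]
  have he (i : Fin 2) : e i = EuclideanSpace.single i 1 := by simp [e]
  have hL0 : L (EuclideanSpace.single 0 1) = Q - P := by
    rw [← he]
    exact e.constr_basis ℝ _ 0
  have hL1 : L (EuclideanSpace.single 1 1) = R - P := by
    rw [← he]
    exact e.constr_basis ℝ _ 1
  have hdet : LinearMap.det L = (Q 0 - P 0) * (R 1 - P 1) - (R 0 - P 0) * (Q 1 - P 1) := by
    rw [← LinearMap.det_toMatrix e, Matrix.det_fin_two]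
    simp [e, LinearMap.toMatrix_apply, hL0, hL1]
  have himage : convexHull ℝ {P, Q, R} = (P + ·) '' (L '' convexHull ℝ
      {0, EuclideanSpace.single 0 1, EuclideanSpace.single 1 1}) := by
    change _ = P +ᵥ L '' _
    rw [L.image_convexHull, ← convexHull_vadd]
    simp [image_insert_eq, vadd_set_insert, hL0, hL1]
  rw [himage, image_add_left, measure_preimage_add, Measure.addHaar_image_linearMap,
    volume_convexHull_zero_single_single, ← ENNReal.ofReal_mul (abs_nonneg _), hdet, mul_one_div]

lemma dist_sq_eq (P Q : Plane) : dist P Q ^ 2 = (P 0 - Q 0) ^ 2 + (P 1 - Q 1) ^ 2 := by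
  rw [EuclideanSpace.dist_sq_eq]
  simp [Fin.sum_univ_two, Real.dist_eq, sq_abs]

/-- The area of a triangle with side lengths `p`, `q`, `r` by Heron's formula. For
nonnegative `p`, `q`, `r` violating the triangle inequality, the square root takes its junk value
`0`. -/
def heronArea (p q r : ℝ) : ℝ :=
  √((p + q + r) * (-p + q + r) * (p - q + r) * (p + q - r)) / 4

lemma heronArea_of_sq_eq {p q r : ℝ} (hp : 0 ≤ p) (hq : 0 ≤ q)
    (h : r ^ 2 = p ^ 2 + q ^ 2 + p * q) : heronArea p q r = √3 / 4 * (p * q) := by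
  have hprod : (p + q + r) * (-p + q + r) * (p - q + r) * (p + q - r) = 3 * (p * q) ^ 2 := by
    linear_combination (p ^ 2 + q ^ 2 - p * q - r ^ 2) * h
  rw [heronArea, hprod, Real.sqrt_mul (by norm_num), Real.sqrt_sq (mul_nonneg hp hq)]
  ring

lemma heronArea_self (x : ℝ) : heronArea x x x = √3 / 4 * x ^ 2 := by
  have hprod : (x + x + x) * (-x + x + x) * (x - x + x) * (x + x - x) = 3 * (x ^ 2) ^ 2 := by ring
  rw [heronArea, hprod, Real.sqrt_mul (by norm_num), Real.sqrt_sq (sq_nonneg x)]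
  ring

end Area

namespace IsTriangle

variable {p q r : ℝ} {T : Set Plane}

lemma convex (hT : IsTriangle p q r T) : Convex ℝ T := by
  obtain ⟨P, Q, R, -, -, -, rfl⟩ := hT
  exact convex_convexHull ℝ _

lemma isCompact (hT : IsTriangle p q r T) : IsCompact T := by
  obtain ⟨P, Q, R, -, -, -, rfl⟩ := hT
  exact (toFinite _).isCompact_convexHull (𝕜 := ℝ)

lemma image (hT : IsTriangle p q r T) (f : Plane ≃ᵢ Plane) : IsTriangle p q r (f '' T) := by
  obtain ⟨P, Q, R, hQR, hPR, hPQ, rfl⟩ := hT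
  refine ⟨f P, f Q, f R, by rwa [f.dist_eq], by rwa [f.dist_eq], by rwa [f.dist_eq], ?_⟩
  have himage := f.toRealAffineIsometryEquiv.toAffineEquiv.toAffineMap.image_convexHull {P, Q, R}
  simpa [image_insert_eq] using himage

lemma volume_eq (hT : IsTriangle p q r T) : volume T = ENNReal.ofReal (heronArea p q r) := by
  obtain ⟨P, Q, R, rfl, rfl, rfl, rfl⟩ := hT
  rw [volume_convexHull_triple]
  congr 1
  have hheron (p q r : ℝ) : (p + q + r) * (-p + q + r) * (p - q + r) * (p + q - r) =
      4 * r ^ 2 * q ^ 2 - (r ^ 2 + q ^ 2 - p ^ 2) ^ 2 := by ring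
  set d := (Q 0 - P 0) * (R 1 - P 1) - (R 0 - P 0) * (Q 1 - P 1) with hd
  have hsq : 4 * dist P Q ^ 2 * dist P R ^ 2 -
      (dist P Q ^ 2 + dist P R ^ 2 - dist Q R ^ 2) ^ 2 = (2 * d) ^ 2 := by
    simp only [dist_sq_eq, hd]
    ring
  rw [heronArea, hheron, hsq, Real.sqrt_sq_eq_abs, abs_mul, abs_two]
  ring

lemma volume_real_preimage_mem_closure (hT : IsTriangle p q r T) {φ : Plane →L[ℝ] ℝ} (hφ : φ ≠ 0)
    {g : ℝ →ₗᵢ[ℝ] Plane} (hg : g.range = φ.ker) (hnonneg : ∀ z ∈ T, 0 ≤ φ z)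
    (hint : (interior T).Nonempty) :
    volume.real (g ⁻¹' T) ∈ AddSubmonoid.closure {p, q, r} := by
  obtain ⟨P, Q, R, rfl, rfl, rfl, rfl⟩ := hT
  rcases volume_real_preimage_convexHull_triple hφ hg hnonneg hint with h | h
  · exact h ▸ zero_mem _
  · exact AddSubmonoid.subset_closure h

end IsTriangle

namespace TilesInto

variable {S : Set Plane} {N : ℕ} {p q r : ℝ}

lemma exists_tiles (hS : TilesInto S N p q r) :
    ∃ T : Fin N → Set Plane, (∀ i, IsTriangle p q r (T i)) ∧ S = ⋃ i, T i ∧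
      Pairwise fun i j => Disjoint (interior (T i)) (interior (T j)) := by
  obtain ⟨f, Δ, hΔ, hunion, hdisj⟩ := hS
  exact ⟨fun i => f i '' Δ, fun i => hΔ.image (f i), hunion,
    fun i j hij => disjoint_iff_inter_eq_empty.2 (hdisj i j hij)⟩

lemma volume_eq (hS : TilesInto S N p q r) :
    volume S = N * ENNReal.ofReal (heronArea p q r) := by
  obtain ⟨T, hT, rfl, hdisj⟩ := hS.exists_tiles
  simp [measure_iUnion_of_disjoint_interior volume (fun i => (hT i).convex) hdisj,
    (hT _).volume_eq]

theorem volume_real_preimage_mem_closure (hS : TilesInto S N p q r) (hvol : volume S ≠ 0)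
    {φ : Plane →L[ℝ] ℝ} (hφ : φ ≠ 0) {g : ℝ →ₗᵢ[ℝ] Plane} (hg : g.range = φ.ker)
    (hnonneg : ∀ z ∈ S, 0 ≤ φ z) :
    volume.real (g ⁻¹' S) ∈ AddSubmonoid.closure {p, q, r} := by
  have htile : ENNReal.ofReal (heronArea p q r) ≠ 0 := right_ne_zero_of_mul (hS.volume_eq ▸ hvol)
  obtain ⟨T, hT, rfl, hdisj⟩ := hS.exists_tiles
  have hint (i : Fin N) : (interior (T i)).Nonempty :=
    nonempty_interior_of_measure_ne_zero volume (hT i).convex ((hT i).volume_eq ▸ htile)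
  have hTnonneg (i : Fin N) (z : Plane) (hz : z ∈ T i) : 0 ≤ φ z :=
    hnonneg z (mem_iUnion_of_mem i hz)
  have hsum : volume (g ⁻¹' ⋃ i, T i) = ∑ i, volume (g ⁻¹' T i) := by
    rw [preimage_iUnion]
    refine measure_iUnion_of_disjoint_interior volume
      (fun i => (hT i).convex.linear_preimage g.toLinearMap) fun i j hij => ?_
    exact (disjoint_interior_preimage_of_disjoint_interior (g := g.toContinuousLinearMap) hφ hg.ge
      (hT i).convex (hT j).convex (hint i) (hint j) (hTnonneg i) (hTnonneg j)
      (hdisj hij)).mono_right interior_subset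
  have hfinite (i : Fin N) : volume (g ⁻¹' T i) ≠ ⊤ :=
    (g.isometry.isClosedEmbedding.isCompact_preimage (hT i).isCompact).measure_ne_top
  rw [measureReal_def, hsum, ENNReal.toReal_sum fun i _ => hfinite i]
  exact sum_mem fun i _ => (hT i).volume_real_preimage_mem_closure hφ hg (hTnonneg i) (hint i)

end TilesInto

section Equilateral

variable {X : ℝ}

lemma isTriangle_equilateralTri (hX : 0 ≤ X) : IsTriangle X X X (EquilateralTri X) := by
  have hdist {P Q : Plane} (h : (P 0 - Q 0) ^ 2 + (P 1 - Q 1) ^ 2 = X ^ 2) : dist P Q = X := by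
    rw [← Real.sqrt_sq hX, ← h, ← dist_sq_eq, Real.sqrt_sq dist_nonneg]
  have hsqrt : √3 ^ 2 = 3 := Real.sq_sqrt (by norm_num)
  refine ⟨_, _, _, hdist ?_, hdist ?_, hdist ?_, rfl⟩ <;> simp [pt]
  · linear_combination X ^ 2 / 4 * hsqrt
  · linear_combination X ^ 2 / 4 * hsqrt

lemma volume_equilateralTri (hX : 0 ≤ X) :
    volume (EquilateralTri X) = ENNReal.ofReal (√3 / 4 * X ^ 2) := by
  rw [(isTriangle_equilateralTri hX).volume_eq, heronArea_self]

/-- The first coordinate axis, parametrized by arc length. It carries the base of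
`EquilateralTri X`. -/
def xAxis : ℝ →ₗᵢ[ℝ] Plane :=
  LinearIsometry.toSpanSingleton ℝ Plane (v := EuclideanSpace.single 0 1) (by simp)

lemma xAxis_apply (x : ℝ) : xAxis x = pt x 0 := by
  ext i
  fin_cases i <;> simp [xAxis, pt]

lemma range_xAxis : xAxis.range = (EuclideanSpace.proj 1 : Plane →L[ℝ] ℝ).ker := by
  ext v
  constructor
  · rintro ⟨x, rfl⟩
    simp [xAxis_apply, pt]
  · intro hv
    refine ⟨v 0, ?_⟩
    ext i
    fin_cases i
    · simp [xAxis_apply, pt]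
    · simpa [xAxis_apply, pt] using hv.symm

lemma nonneg_of_mem_equilateralTri (hX : 0 ≤ X) {z : Plane} (hz : z ∈ EquilateralTri X) :
    0 ≤ z 1 := by
  have hconv : Convex ℝ {z : Plane | 0 ≤ z 1} :=
    (convex_Ici 0).linear_preimage (EuclideanSpace.proj 1 : Plane →L[ℝ] ℝ).toLinearMap
  refine convexHull_min ?_ hconv hz
  have hheight : 0 ≤ X * √3 / 2 := by positivity
  rintro z (rfl | rfl | rfl) <;> simp [pt, hheight]

lemma volume_real_preimage_xAxis_equilateralTri (hX : 0 < X) :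
    volume.real (xAxis ⁻¹' EquilateralTri X) = X := by
  have hpre : xAxis ⁻¹' EquilateralTri X =
      convexHull ℝ (xAxis ⁻¹' {pt 0 0, pt X 0, pt (X / 2) (X * √3 / 2)}) :=
    preimage_convexHull_eq (g := xAxis.toLinearMap) xAxis.injective range_xAxis fun z hz =>
      nonneg_of_mem_equilateralTri hX.le (subset_convexHull ℝ _ hz)
  have hvertices : xAxis ⁻¹' {pt 0 0, pt X 0, pt (X / 2) (X * √3 / 2)} = {0, X} := by
    have hheight : 0 ≠ X * √3 / 2 := by positivity
    ext x
    simp [xAxis_apply, pt, hheight]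
  rw [hpre, hvertices, convexHull_pair, segment_eq_uIcc, Real.volume_real_interval, sub_zero,
    abs_of_pos hX]

end Equilateral

section EquilateralTiling

variable {X p q r : ℝ} {N : ℕ}

theorem mem_closure_of_tilesInto_equilateralTri (hX : 0 < X)
    (h : TilesInto (EquilateralTri X) N p q r) : X ∈ AddSubmonoid.closure {p, q, r} := by
  have hvol : volume (EquilateralTri X) ≠ 0 := by
    rw [volume_equilateralTri hX.le]
    exact (ENNReal.ofReal_pos.2 (by positivity)).ne'
  have hproj : (EuclideanSpace.proj 1 : Plane →L[ℝ] ℝ) ≠ 0 := fun h0 => by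
    simpa using DFunLike.congr_fun h0 (EuclideanSpace.single 1 1)
  rw [← volume_real_preimage_xAxis_equilateralTri hX]
  exact h.volume_real_preimage_mem_closure hvol hproj range_xAxis
    fun z hz => nonneg_of_mem_equilateralTri hX.le hz

theorem sq_eq_of_tilesInto_equilateralTri (hX : 0 ≤ X) (hp : 0 ≤ p) (hq : 0 ≤ q)
    (hr : r ^ 2 = p ^ 2 + q ^ 2 + p * q) (h : TilesInto (EquilateralTri X) N p q r) :
    X ^ 2 = N * (p * q) := by
  have harea := h.volume_eq
  rw [volume_equilateralTri hX, heronArea_of_sq_eq hp hq hr, ← ENNReal.ofReal_natCast,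
    ← ENNReal.ofReal_mul (Nat.cast_nonneg N),
    ENNReal.ofReal_eq_ofReal_iff (by positivity) (by positivity)] at harea
  have hsqrt : √3 / 4 ≠ 0 := by positivity
  exact mul_left_cancel₀ hsqrt (by linarith)

lemma exists_nat_eq_of_mem_closure {a b c : ℕ}
    (hX : X ∈ AddSubmonoid.closure {(a : ℝ), (b : ℝ), (c : ℝ)}) : ∃ n : ℕ, X = n := by
  have hle : AddSubmonoid.closure {(a : ℝ), (b : ℝ), (c : ℝ)} ≤
      AddMonoidHom.mrange (Nat.castAddMonoidHom ℝ) := by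
    rw [AddSubmonoid.closure_le]
    rintro _ (rfl | rfl | rfl) <;> exact ⟨_, rfl⟩
  obtain ⟨n, rfl⟩ := hle hX
  exact ⟨n, rfl⟩

end EquilateralTiling

theorem stmt5 (a b c : ℕ) (ha : 0 < a) (hb : 0 < b) (hc : 0 < c)
    (hab : Nat.Coprime a b) (hac : Nat.Coprime a c) (hbc : Nat.Coprime b c)
    (h : c ^ 2 = a ^ 2 + b ^ 2 + a * b)
    (hsa : Squarefree a) (hsb : Squarefree b)
    (X : ℝ) (hX : 0 < X) (N : ℕ) (hN : 0 < N)
    (htile : TilesInto (EquilateralTri X) N a b c) :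
    ∃ m : ℕ, 0 < m ∧ X = (m : ℝ) * a * b := by
  have harea : X ^ 2 = N * (a * b) :=
    sq_eq_of_tilesInto_equilateralTri hX.le a.cast_nonneg b.cast_nonneg (by exact_mod_cast h) htile
  obtain ⟨n, rfl⟩ : ∃ n : ℕ, X = n :=
    exists_nat_eq_of_mem_closure (mem_closure_of_tilesInto_equilateralTri hX htile)
  have hsq : n ^ 2 = N * (a * b) := by exact_mod_cast harea
  have hsquarefree : Squarefree (a * b) := (Nat.squarefree_mul hab).2 ⟨hsa, hsb⟩
  obtain ⟨m, rfl⟩ : a * b ∣ n :=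
    (hsquarefree.dvd_pow_iff_dvd two_ne_zero).1 (Dvd.intro_left N hsq.symm)
  refine ⟨m, Nat.pos_of_ne_zero ?_, by push_cast; ring⟩
  rintro rfl
  simp at hX
end
end
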